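/- Let a ≥ b be positive integers and c a positive integer with gcd(a,c) = gcd(b,c) = 1, let Γ be the Z-grading of K[x,y,z] with deg x = a, deg y = b, deg z = −c, and let q̂ = max{q ∈ Z : bq ≡ a (mod c) and bq < a}. If q̂ = 1, then every Γ-graded automorphism of K[x,y,z] is graded-tame, i.e., a composition of Γ-graded elementary and Γ-graded linear automorphisms. -/

import Mathlib

open MvPolynomial

/-- An automorphism of `K[x,y,z]` is *elementary* if it sends one variable to itself plus
a polynomial in the other two variables and fixes the other variables. -/
def IsElementary {K : Type*} [CommRing K]
    (φ : MvPolynomial (Fin 3) K ≃ₐ[K] MvPolynomial (Fin 3) K) : Prop :=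
  ∃ (i : Fin 3) (F : MvPolynomial (Fin 3) K), i ∉ F.vars ∧
    φ (X i) = X i + F ∧ ∀ j : Fin 3, j ≠ i → φ (X j) = X j

/-- An automorphism of `K[x,y,z]` is *linear* if it sends each variable to a `K`-linear
combination of the variables. -/
def IsLinearAut {K : Type*} [CommRing K]
    (φ : MvPolynomial (Fin 3) K ≃ₐ[K] MvPolynomial (Fin 3) K) : Prop :=
  ∀ i : Fin 3, ∃ c : Fin 3 → K, φ (X i) = ∑ j : Fin 3, C (c j) * X j

/-- For the `ℤ`-grading of `K[x,y,z]` with weights `w`, an automorphism is *graded*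
if it maps each homogeneous component into itself. -/
def IsGraded {K : Type*} [CommRing K] (w : Fin 3 → ℤ)
    (φ : MvPolynomial (Fin 3) K ≃ₐ[K] MvPolynomial (Fin 3) K) : Prop :=
  ∀ (d : ℤ) (f : MvPolynomial (Fin 3) K),
    f.IsWeightedHomogeneous w d → (φ f).IsWeightedHomogeneous w d

/-- A graded automorphism is *graded-tame* if it is a composition of graded elementary
and graded linear automorphisms. -/
def IsGradedTame {K : Type*} [CommRing K] (w : Fin 3 → ℤ)
    (φ : MvPolynomial (Fin 3) K ≃ₐ[K] MvPolynomial (Fin 3) K) : Prop :=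
  ∃ l : List (MvPolynomial (Fin 3) K ≃ₐ[K] MvPolynomial (Fin 3) K),
    (∀ ψ ∈ l, IsGraded w ψ ∧ (IsElementary ψ ∨ IsLinearAut ψ)) ∧ φ = l.prod

namespace GT

open MvPolynomial

variable {K : Type*} [Field K]

/-- Euler operator `X_k ∂_k`. -/
noncomputable def E (k : Fin 3) (u : MvPolynomial (Fin 3) K) : MvPolynomial (Fin 3) K :=
  X k * pderiv k u

lemma coeff_E (k : Fin 3) (u : MvPolynomial (Fin 3) K) (d : Fin 3 →₀ ℕ) :
    (E k u).coeff d = (d k : K) * u.coeff d := by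
  induction u using MvPolynomial.induction_on' with
  | monomial e r =>
    rw [E, X_mul_pderiv_monomial, coeff_smul, coeff_monomial]
    split_ifs with h
    · subst h; simp
    · simp
  | add p q hp hq =>
    have : E k (p + q) = E k p + E k q := by simp [E, mul_add]
    rw [this, coeff_add, hp, hq, coeff_add, mul_add]

lemma E_mul (k : Fin 3) (u v : MvPolynomial (Fin 3) K) : E k (u * v) = E k u * v + u * E k v := by
  simp only [E, pderiv_mul]; ring

lemma E_sub (k : Fin 3) (u v : MvPolynomial (Fin 3) K) : E k (u - v) = E k u - E k v := by
  simp only [E, map_sub]; ring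

lemma E_C_mul (k : Fin 3) (r : K) (v : MvPolynomial (Fin 3) K) : E k (C r * v) = C r * E k v := by
  simp only [E, pderiv_C_mul]; ring

lemma E_pow_mul (k : Fin 3) (u : MvPolynomial (Fin 3) K) (n : ℕ) :
    E k (u ^ n) * u = n * u ^ n * E k u := by
  induction n with
  | zero => simp [E]
  | succ n ih =>
    rw [pow_succ, E_mul]
    have : (E k (u ^ n) * u + u ^ n * E k u) * u = (E k (u ^ n) * u) * u + u ^ n * E k u * u := by
      ring
    rw [this, ih]; push_cast; ring

/-- two polynomials with the same logarithmic derivatives are proportional -/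
lemma proportional [CharZero K] (F G : MvPolynomial (Fin 3) K) (hF : F ≠ 0) (hG : G ≠ 0)
    (h : ∀ k, E k F * G = F * E k G) : ∃ l : K, F = C l * G := by
  let m : MonomialOrder (Fin 3) := MonomialOrder.lex
  have hdegE : ∀ (k : Fin 3) (u : MvPolynomial (Fin 3) K), m.toSyn (m.degree (E k u)) ≤ m.toSyn (m.degree u) := by
    intro k u
    rw [m.degree_le_iff]
    intro c hc
    apply m.le_degree
    rw [mem_support_iff, coeff_E] at hc
    rw [mem_support_iff]
    exact right_ne_zero_of_mul hc
  have key : ∀ H : MvPolynomial (Fin 3) K, H ≠ 0 → (∀ k, E k H * G = H * E k G) →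
      m.degree H = m.degree G := by
    intro H hH hk
    ext k
    have h1 := congrArg (coeff (m.degree H + m.degree G)) (hk k)
    rw [m.coeff_mul_of_add_of_degree_le (hdegE k H) le_rfl,
      m.coeff_mul_of_add_of_degree_le le_rfl (hdegE k G), coeff_E, coeff_E] at h1
    have hH' : coeff (m.degree H) H ≠ 0 := m.leadingCoeff_ne_zero_iff.mpr hH
    have hG' : coeff (m.degree G) G ≠ 0 := m.leadingCoeff_ne_zero_iff.mpr hG
    have h2 : ((m.degree H k : ℕ) : K) = (m.degree G k : ℕ) := by
      apply mul_right_cancel₀ (mul_ne_zero hH' hG')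
      linear_combination h1
    exact_mod_cast h2
  refine ⟨m.leadingCoeff F / m.leadingCoeff G, ?_⟩
  rw [← sub_eq_zero]
  by_contra hne
  set l := m.leadingCoeff F / m.leadingCoeff G with hl
  have hdeg := key _ hne (by
    intro k
    rw [E_sub, E_C_mul]
    linear_combination h k)
  have hF1 := key F hF h
  have hG' : coeff (m.degree G) G ≠ 0 := m.leadingCoeff_ne_zero_iff.mpr hG
  have hlc : m.leadingCoeff (F - C l * G) ≠ 0 := m.leadingCoeff_ne_zero_iff.mpr hne
  apply hlc
  rw [MonomialOrder.leadingCoeff, hdeg, coeff_sub, coeff_C_mul, hl, MonomialOrder.leadingCoeff,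
    MonomialOrder.leadingCoeff, hF1]
  field_simp
  ring

/-- The degree in `x,y`, recorded as a polynomial over the polynomial ring. -/
noncomputable def Th : MvPolynomial (Fin 3) K →ₐ[K] Polynomial (MvPolynomial (Fin 3) K) :=
  aeval ![Polynomial.C (X 0) * Polynomial.X, Polynomial.C (X 1) * Polynomial.X,
    Polynomial.C (X 2)]

lemma Th_monomial (d : Fin 3 →₀ ℕ) (r : K) :
    Th (monomial d r) = Polynomial.monomial (d 0 + d 1) (monomial d r) := by
  rw [Th, aeval_monomial, Finsupp.prod_fintype _ _ (by simp), Fin.prod_univ_three]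
  rw [monomial_eq, Finsupp.prod_fintype _ _ (by simp), Fin.prod_univ_three]
  rw [← Polynomial.C_mul_X_pow_eq_monomial]
  simp [IsScalarTower.algebraMap_apply K (MvPolynomial (Fin 3) K)
    (Polynomial (MvPolynomial (Fin 3) K))]
  ring

lemma coeff_Th (u : MvPolynomial (Fin 3) K) (k : ℕ) (d : Fin 3 →₀ ℕ) :
    ((Th u).coeff k).coeff d = if d 0 + d 1 = k then u.coeff d else 0 := by
  induction u using MvPolynomial.induction_on' with
  | monomial e r =>
    rw [Th_monomial, Polynomial.coeff_monomial, coeff_monomial]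
    by_cases h : e = d
    · subst h
      split_ifs <;> simp_all
    · split_ifs <;> simp [coeff_monomial, h]
  | add p q hp hq =>
    rw [map_add, Polynomial.coeff_add, coeff_add, hp, hq, coeff_add]
    split_ifs <;> simp

lemma Th_eq_zero (u : MvPolynomial (Fin 3) K) : Th u = 0 ↔ u = 0 := by
  constructor
  · intro h
    ext d
    have := coeff_Th u (d 0 + d 1) d
    rw [h] at this
    simpa using this.symm
  · rintro rfl; simp

lemma Th_E (k : Fin 3) (u : MvPolynomial (Fin 3) K) (n : ℕ) :
    (Th (E k u)).coeff n = E k ((Th u).coeff n) := by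
  ext d
  rw [coeff_Th, coeff_E, coeff_E, coeff_Th]
  split_ifs <;> simp

noncomputable def vd (u : MvPolynomial (Fin 3) K) : ℕ := (Th u).natDegree

noncomputable def ld (u : MvPolynomial (Fin 3) K) : MvPolynomial (Fin 3) K := (Th u).leadingCoeff

lemma ld_ne (u : MvPolynomial (Fin 3) K) (h : u ≠ 0) : ld u ≠ 0 := by
  rw [ld, Polynomial.leadingCoeff_ne_zero]
  exact fun h' => h ((Th_eq_zero u).1 h')

lemma vd_E (k : Fin 3) (u : MvPolynomial (Fin 3) K) : vd (E k u) ≤ vd u := by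
  rw [vd, Polynomial.natDegree_le_iff_coeff_eq_zero]
  intro N hN
  rw [Th_E, Polynomial.coeff_eq_zero_of_natDegree_lt hN]
  simp [E]

lemma vd_mul (u v : MvPolynomial (Fin 3) K) (hu : u ≠ 0) (hv : v ≠ 0) :
    vd (u * v) = vd u + vd v := by
  rw [vd, map_mul, Polynomial.natDegree_mul]
  · rfl
  · exact fun h' => hu ((Th_eq_zero u).1 h')
  · exact fun h' => hv ((Th_eq_zero v).1 h')

lemma vd_mul_le (u v : MvPolynomial (Fin 3) K) : vd (u * v) ≤ vd u + vd v := by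
  rw [vd, map_mul]
  exact Polynomial.natDegree_mul_le

lemma ld_mul (u v : MvPolynomial (Fin 3) K) : ld (u * v) = ld u * ld v := by
  rw [ld, map_mul, Polynomial.leadingCoeff_mul]; rfl

lemma ld_pow (u : MvPolynomial (Fin 3) K) (n : ℕ) : ld (u ^ n) = ld u ^ n := by
  rw [ld, map_pow, Polynomial.leadingCoeff_pow]; rfl

lemma vd_pow (u : MvPolynomial (Fin 3) K) (n : ℕ) : vd (u ^ n) = n * vd u := by
  rw [vd, map_pow, Polynomial.natDegree_pow]; rfl

lemma vd_sub_le (u v : MvPolynomial (Fin 3) K) : vd (u - v) ≤ max (vd u) (vd v) := by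
  rw [vd, map_sub]
  exact Polynomial.natDegree_sub_le _ _

lemma vd_mem (u : MvPolynomial (Fin 3) K) (d : Fin 3 →₀ ℕ) (hd : u.coeff d ≠ 0) :
    d 0 + d 1 ≤ vd u := by
  apply Polynomial.le_natDegree_of_ne_zero
  intro h
  have := coeff_Th u (d 0 + d 1) d
  rw [h] at this
  simp at this
  exact hd this.symm

lemma Th_X0 : Th (X 0 : MvPolynomial (Fin 3) K) = Polynomial.C (X 0) * Polynomial.X := by
  simp [Th]
lemma Th_X1 : Th (X 1 : MvPolynomial (Fin 3) K) = Polynomial.C (X 1) * Polynomial.X := by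
  simp [Th]
lemma Th_X2 : Th (X 2 : MvPolynomial (Fin 3) K) = Polynomial.C (X 2) := by
  simp [Th]
lemma Th_C (r : K) : Th (C r : MvPolynomial (Fin 3) K) = Polynomial.C (C r) := by
  exact Th_monomial (0 : Fin 3 →₀ ℕ) r

lemma vd_X0 : vd (X 0 : MvPolynomial (Fin 3) K) = 1 := by
  rw [vd, Th_X0, Polynomial.natDegree_C_mul_X _ (X_ne_zero _)]
lemma vd_X1 : vd (X 1 : MvPolynomial (Fin 3) K) = 1 := by
  rw [vd, Th_X1, Polynomial.natDegree_C_mul_X _ (X_ne_zero _)]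
lemma vd_X2 : vd (X 2 : MvPolynomial (Fin 3) K) = 0 := by
  rw [vd, Th_X2, Polynomial.natDegree_C]
lemma vd_C (r : K) : vd (C r : MvPolynomial (Fin 3) K) = 0 := by
  rw [vd, Th_C, Polynomial.natDegree_C]
lemma ld_X2 : ld (X 2 : MvPolynomial (Fin 3) K) = X 2 := by
  rw [ld, Th_X2, Polynomial.leadingCoeff_C]
lemma ld_C (r : K) : ld (C r : MvPolynomial (Fin 3) K) = C r := by
  rw [ld, Th_C, Polynomial.leadingCoeff_C]

/-- if leading forms agree then the degree of the difference drops -/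
lemma vd_sub_lt (u v : MvPolynomial (Fin 3) K) (hd : vd u = vd v) (hl : ld u = ld v)
    (h0 : 0 < vd u) : vd (u - v) < vd u := by
  by_cases hu : u = 0
  · subst hu; simp [vd] at h0
  rw [vd, map_sub]
  by_cases hz : Th u - Th v = 0
  · rw [hz]; simp; exact h0
  apply Polynomial.natDegree_lt_natDegree hz
  apply Polynomial.degree_sub_lt_left
  · have hv : v ≠ 0 := by rintro rfl; simp [vd] at hd h0; omega
    rw [Polynomial.degree_eq_natDegree (fun h' => hu ((Th_eq_zero u).1 h')),
      Polynomial.degree_eq_natDegree (fun h' => hv ((Th_eq_zero v).1 h'))]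
    exact_mod_cast hd
  · exact fun h' => hu ((Th_eq_zero u).1 h')
  · exact hl

end GT
namespace GT

open MvPolynomial

variable {K : Type*} [Field K]

lemma chain (φ : MvPolynomial (Fin 3) K ≃ₐ[K] MvPolynomial (Fin 3) K) (l : K)
    (hz : φ (X 2) = C l * X 2) (k : Fin 3) (hk : k ≠ 2) (Q : MvPolynomial (Fin 3) K) :
    pderiv k (φ Q) = φ (pderiv 0 Q) * pderiv k (φ (X 0)) + φ (pderiv 1 Q) * pderiv k (φ (X 1)) := by
  have hC : ∀ r : K, φ (C r) = C r := fun r => φ.commutes r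
  induction Q using MvPolynomial.induction_on with
  | C r => simp [hC]
  | add p q hp hq => simp only [map_add, hp, hq]; ring
  | mul_X p i hp =>
    rw [map_mul, pderiv_mul, hp, pderiv_mul, pderiv_mul]
    have h20 : pderiv (0 : Fin 3) (X 2 : MvPolynomial (Fin 3) K) = 0 := pderiv_X_of_ne (by decide)
    have h21 : pderiv (1 : Fin 3) (X 2 : MvPolynomial (Fin 3) K) = 0 := pderiv_X_of_ne (by decide)
    have h10 : pderiv (0 : Fin 3) (X 1 : MvPolynomial (Fin 3) K) = 0 := pderiv_X_of_ne (by decide)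
    have h01 : pderiv (1 : Fin 3) (X 0 : MvPolynomial (Fin 3) K) = 0 := pderiv_X_of_ne (by decide)
    have h2k : pderiv k (X 2 : MvPolynomial (Fin 3) K) = 0 := pderiv_X_of_ne hk.symm
    fin_cases i
    · simp only [Fin.zero_eta, map_add, map_mul, pderiv_X_self, h01, map_one, map_zero]; ring
    · simp only [Fin.mk_one, map_add, map_mul, pderiv_X_self, h10, map_one, map_zero]; ring
    · simp only [Fin.reduceFinMk, map_add, map_mul, h20, h21, map_zero, hz, pderiv_C_mul, h2k]; ring

lemma jac (φ : MvPolynomial (Fin 3) K ≃ₐ[K] MvPolynomial (Fin 3) K) (l : K)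
    (hz : φ (X 2) = C l * X 2) : ∃ j : K, j ≠ 0 ∧
    pderiv 0 (φ (X 0)) * pderiv 1 (φ (X 1)) - pderiv 1 (φ (X 0)) * pderiv 0 (φ (X 1)) = C j := by
  set J := pderiv 0 (φ (X 0)) * pderiv 1 (φ (X 1)) - pderiv 1 (φ (X 0)) * pderiv 0 (φ (X 1)) with hJ
  have c0 := fun Q => chain φ l hz 0 (by decide) Q
  have c1 := fun Q => chain φ l hz 1 (by decide) Q
  have h00 := c0 (φ.symm (X 0))
  have h01 := c0 (φ.symm (X 1))
  have h10 := c1 (φ.symm (X 0))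
  have h11 := c1 (φ.symm (X 1))
  rw [φ.apply_symm_apply] at h00 h01 h10 h11
  rw [pderiv_X_self] at h00 h11
  rw [pderiv_X_of_ne (by decide)] at h10 h01
  have hu : IsUnit J := by
    refine IsUnit.of_mul_eq_one (φ (pderiv 0 (φ.symm (X 0)) * pderiv 1 (φ.symm (X 1)) -
      pderiv 1 (φ.symm (X 0)) * pderiv 0 (φ.symm (X 1)))) ?_
    rw [hJ]
    simp only [map_sub, map_mul]
    generalize φ (pderiv 0 (φ.symm (X 0))) = A at *
    generalize φ (pderiv 1 (φ.symm (X 0))) = B at *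
    generalize φ (pderiv 0 (φ.symm (X 1))) = C' at *
    generalize φ (pderiv 1 (φ.symm (X 1))) = D at *
    generalize pderiv 0 (φ (X 0)) = P at *
    generalize pderiv 1 (φ (X 0)) = Q at *
    generalize pderiv 0 (φ (X 1)) = R at *
    generalize pderiv 1 (φ (X 1)) = S at *
    linear_combination (-1) * h11 - (C' * Q + D * S) * h00 + (C' * P + D * R) * h10
  obtain ⟨r, hr, h⟩ := (isUnit_iff_eq_C_of_isReduced).1 hu
  exact ⟨r, hr.ne_zero, h⟩

lemma poisson (φ : MvPolynomial (Fin 3) K ≃ₐ[K] MvPolynomial (Fin 3) K) (l : K)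
    (hz : φ (X 2) = C l * X 2) : ∃ j : K, j ≠ 0 ∧ ∀ Q,
    E 0 (φ (X 0)) * E 1 (φ Q) - E 1 (φ (X 0)) * E 0 (φ Q) =
      C j * (X 0 * X 1) * φ (pderiv 1 Q) := by
  obtain ⟨j, hj, h⟩ := jac φ l hz
  refine ⟨j, hj, fun Q => ?_⟩
  rw [← h]
  simp only [E]
  rw [chain φ l hz 0 (by decide) Q, chain φ l hz 1 (by decide) Q]
  ring

lemma vd_CX (j : K) (hj : j ≠ 0) (u : MvPolynomial (Fin 3) K) (hu : u ≠ 0) :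
    vd (C j * (X 0 * X 1) * u) = 2 + vd u := by
  have h0 : (X 0 : MvPolynomial (Fin 3) K) ≠ 0 := X_ne_zero _
  have h1 : (X 1 : MvPolynomial (Fin 3) K) ≠ 0 := X_ne_zero _
  have h2 : (C j : MvPolynomial (Fin 3) K) ≠ 0 := by simpa using hj
  rw [vd_mul _ _ (mul_ne_zero h2 (mul_ne_zero h0 h1)) hu, vd_mul _ _ h2 (mul_ne_zero h0 h1),
    vd_mul _ _ h0 h1, vd_C, vd_X0, vd_X1]

lemma vd_bracket (u v : MvPolynomial (Fin 3) K) :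
    vd (E 0 u * E 1 v - E 1 u * E 0 v) ≤ vd u + vd v := by
  refine (vd_sub_le _ _).trans (max_le ?_ ?_)
  · exact (vd_mul_le _ _).trans (add_le_add (vd_E _ _) (vd_E _ _))
  · exact (vd_mul_le _ _).trans (add_le_add (vd_E _ _) (vd_E _ _))

lemma vd_pderiv (φ : MvPolynomial (Fin 3) K ≃ₐ[K] MvPolynomial (Fin 3) K) (l : K)
    (hz : φ (X 2) = C l * X 2) (Q : MvPolynomial (Fin 3) K) (hQ : pderiv 1 Q ≠ 0) :
    2 + vd (φ (pderiv 1 Q)) ≤ vd (φ (X 0)) + vd (φ Q) := by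
  obtain ⟨j, hj, h⟩ := poisson φ l hz
  have h1 := vd_bracket (φ (X 0)) (φ Q)
  rw [h, vd_CX j hj] at h1
  · exact h1
  · simpa using hQ

lemma two_le (φ : MvPolynomial (Fin 3) K ≃ₐ[K] MvPolynomial (Fin 3) K) (l : K)
    (hz : φ (X 2) = C l * X 2) : 2 ≤ vd (φ (X 0)) + vd (φ (X 1)) := by
  have := vd_pderiv φ l hz (X 1) (by simp)
  omega

lemma step (φ : MvPolynomial (Fin 3) K ≃ₐ[K] MvPolynomial (Fin 3) K) (l : K)
    (hz : φ (X 2) = C l * X 2) (Q : MvPolynomial (Fin 3) K) (r : K) :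
    vd (φ (E 1 Q - C r * Q)) ≤ vd (φ Q) + (vd (φ (X 0)) + vd (φ (X 1)) - 2) := by
  have h2 := two_le φ l hz
  rw [map_sub]
  refine (vd_sub_le _ _).trans (max_le ?_ ?_)
  · by_cases hQ : pderiv 1 Q = 0
    · simp [E, hQ, vd]
    have := vd_pderiv φ l hz Q hQ
    rw [E, map_mul]
    refine (vd_mul_le _ _).trans ?_
    omega
  · have hC : φ (C r) = C r := φ.commutes r
    rw [map_mul, hC]
    refine (vd_mul_le _ _).trans ?_
    rw [vd_C]
    omega

lemma iter (φ : MvPolynomial (Fin 3) K ≃ₐ[K] MvPolynomial (Fin 3) K) (l : K)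
    (hz : φ (X 2) = C l * X 2) (Q : MvPolynomial (Fin 3) K) (s : Finset ℕ) :
    ∃ Q' : MvPolynomial (Fin 3) K,
      (∀ d, Q'.coeff d = (∏ j ∈ s, ((d 1 : K) - (j : K))) * Q.coeff d) ∧
      vd (φ Q') ≤ vd (φ Q) + s.card * (vd (φ (X 0)) + vd (φ (X 1)) - 2) := by
  induction s using Finset.induction_on with
  | empty => exact ⟨Q, by simp, by simp⟩
  | insert a s ha ih =>
    obtain ⟨Q', h1, h2⟩ := ih
    refine ⟨E 1 Q' - C (a : K) * Q', ?_, ?_⟩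
    · intro d
      rw [coeff_sub, coeff_E, coeff_C_mul, h1, Finset.prod_insert ha]
      ring
    · rw [Finset.card_insert_of_notMem ha]
      refine (step φ l hz Q' a).trans ?_
      linarith

lemma top_coeff (φ : MvPolynomial (Fin 3) K ≃ₐ[K] MvPolynomial (Fin 3) K) (l : K)
    (hz : φ (X 2) = C l * X 2) (Q : MvPolynomial (Fin 3) K) (N : ℕ)
    (hN : ∀ d ∈ Q.support, vd (φ (X 0)) * d 0 + vd (φ (X 1)) * d 1 ≤ N) :
    (Th (φ Q)).coeff N =
      ∑ d ∈ Q.support with vd (φ (X 0)) * d 0 + vd (φ (X 1)) * d 1 = N,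
        ld (φ (X 0)) ^ d 0 * ld (φ (X 1)) ^ d 1 * (C (Q.coeff d) * (C l * X 2) ^ d 2) := by
  have hC : ∀ r, φ (C r) = C r := fun r => φ.commutes r
  have hm : ∀ (d : Fin 3 →₀ ℕ) (r : K), φ (monomial d r) =
      φ (X 0) ^ d 0 * φ (X 1) ^ d 1 * (C r * (C l * X 2) ^ d 2) := by
    intro d r
    rw [monomial_eq, Finsupp.prod_fintype _ _ (by simp), Fin.prod_univ_three]
    simp only [map_mul, map_pow, hz, hC]
    ring
  conv_lhs => rw [Q.as_sum]
  rw [map_sum, map_sum, Polynomial.finsetSum_coeff, Finset.sum_filter]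
  refine Finset.sum_congr rfl fun d hd => ?_
  have hle := hN d hd
  rw [hm]
  set u := φ (X 0) ^ d 0 * φ (X 1) ^ d 1 * (C (Q.coeff d) * (C l * X 2) ^ d 2) with hu
  have hl : l ≠ 0 := by
    rintro rfl
    have : φ (X 2) = 0 := by rw [hz]; simp
    simp at this
  have hlX : (C l * X 2 : MvPolynomial (Fin 3) K) ≠ 0 := by
    simp [hl]
  have hc : (C (Q.coeff d) : MvPolynomial (Fin 3) K) ≠ 0 := by
    simpa using hd
  have h0 : φ (X 0) ^ d 0 ≠ 0 := pow_ne_zero _ (by simp)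
  have h1 : φ (X 1) ^ d 1 ≠ 0 := pow_ne_zero _ (by simp)
  have hvu : vd u = vd (φ (X 0)) * d 0 + vd (φ (X 1)) * d 1 := by
    rw [hu, vd_mul _ _ (mul_ne_zero h0 h1) (mul_ne_zero hc (pow_ne_zero _ hlX)), vd_mul _ _ h0 h1,
      vd_mul _ _ hc (pow_ne_zero _ hlX), vd_pow, vd_pow, vd_pow,
      vd_mul _ _ (by simpa using hl) (X_ne_zero _), vd_C, vd_C, vd_X2]
    ring
  split_ifs with h
  · have : (Th u).coeff N = ld u := by rw [ld, Polynomial.leadingCoeff, ← h, ← hvu]; rfl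
    rw [this, hu]
    simp only [ld_mul, ld_pow, ld_C, ld_X2]
  · apply Polynomial.coeff_eq_zero_of_natDegree_lt
    change vd u < N
    omega

lemma divides [CharZero K] (φ : MvPolynomial (Fin 3) K ≃ₐ[K] MvPolynomial (Fin 3) K) (l : K)
    (hz : φ (X 2) = C l * X 2) (hn : 0 < vd (φ (X 0))) (hm : 0 < vd (φ (X 1))) :
    vd (φ (X 0)) ∣ vd (φ (X 1)) ∨ vd (φ (X 1)) ∣ vd (φ (X 0)) := by
  by_contra hcon
  push Not at hcon
  obtain ⟨hnd1, hnd2⟩ := hcon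
  set n := vd (φ (X 0)) with hn'
  set m := vd (φ (X 1)) with hm'
  have hl : l ≠ 0 := by
    rintro rfl
    have : φ (X 2) = 0 := by rw [hz]; simp
    simp at this
  set Q := φ.symm (X 0) with hQ
  have hφQ : φ Q = X 0 := by simp [hQ]
  have hQ0 : Q ≠ 0 := by simp [hQ]
  have hvQ : vd (φ Q) = 1 := by rw [hφQ, vd_X0]
  have hne : Q.support.Nonempty := by simpa using hQ0
  let wt : (Fin 3 →₀ ℕ) → ℕ := fun d => n * d 0 + m * d 1
  obtain ⟨dm, hdm, hmax⟩ := Finset.exists_max_image Q.support wt hne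
  set N := wt dm with hN
  have hn2 : 2 ≤ n := by
    by_contra h
    have : n = 1 := by omega
    rw [this] at hnd1; simp at hnd1
  have hm2 : 2 ≤ m := by
    by_contra h
    have : m = 1 := by omega
    rw [this] at hnd2; simp at hnd2
  -- N ≥ 2
  have hN2 : 2 ≤ N := by
    by_contra hlt
    have hz0 : ∀ d ∈ Q.support, wt d = 0 := by
      intro d hd
      have h1 := hmax d hd
      have h2 : n * d 0 + m * d 1 < 2 := by
        change wt d < 2
        omega
      have h3 : d 0 = 0 := by nlinarith
      have h4 : d 1 = 0 := by nlinarith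
      simp [wt, h3, h4]
    have := vd_pderiv φ l hz
    have hp : pderiv 0 Q = 0 := by
      ext d
      rw [coeff_pderiv]
      have : Q.coeff (d + Finsupp.single 0 1) = 0 := by
        by_contra hc
        have h1 := hz0 _ (mem_support_iff.2 hc)
        simp [wt] at h1
        omega
      simp [this]
    have hp1 : pderiv 1 Q = 0 := by
      ext d
      rw [coeff_pderiv]
      have : Q.coeff (d + Finsupp.single 1 1) = 0 := by
        by_contra hc
        have h1 := hz0 _ (mem_support_iff.2 hc)
        simp [wt] at h1
        omega
      simp [this]
    have h1 := chain φ l hz 0 (by decide) Q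
    rw [hφQ, hp, hp1] at h1
    simp at h1
  let S := Q.support.filter (fun d => wt d = N)
  let J := S.image (fun d => d 1)
  have hJne : J.Nonempty := ⟨dm 1, Finset.mem_image.2 ⟨dm, Finset.mem_filter.2 ⟨hdm, rfl⟩, rfl⟩⟩
  set jm := J.max' hJne with hjm
  have hjmJ : jm ∈ J := J.max'_mem hJne
  obtain ⟨d0, hd0, hd0j⟩ := Finset.mem_image.1 hjmJ
  obtain ⟨hd0s, hd0w⟩ := Finset.mem_filter.1 hd0
  -- gcd
  obtain ⟨p, hp⟩ : ∃ p, n = Nat.gcd n m * p := (Nat.gcd_dvd_left n m)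
  obtain ⟨q, hq⟩ : ∃ q, m = Nat.gcd n m * q := (Nat.gcd_dvd_right n m)
  have hg : 0 < Nat.gcd n m := Nat.gcd_pos_of_pos_left _ hn
  set g := Nat.gcd n m with hgd
  have hpq : Nat.Coprime p q := by
    have := Nat.coprime_div_gcd_div_gcd (m := n) (n := m) hg
    rw [← hgd] at this
    rwa [Nat.div_eq_of_eq_mul_right hg hp, Nat.div_eq_of_eq_mul_right hg hq] at this
  have hp2 : 2 ≤ p := by
    have : p ≠ 0 := by rintro rfl; omega
    have : p ≠ 1 := by rintro rfl; rw [mul_one] at hp; exact hnd1 (hp ▸ hq ▸ Dvd.intro _ rfl)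
    omega
  have hq2 : 2 ≤ q := by
    have : q ≠ 0 := by rintro rfl; omega
    have : q ≠ 1 := by rintro rfl; rw [mul_one] at hq; exact hnd2 (hq ▸ hp ▸ Dvd.intro _ rfl)
    omega
  have hcong : ∀ j ∈ J, j ≡ jm [MOD p] := by
    intro j hj
    obtain ⟨d, hd, rfl⟩ := Finset.mem_image.1 hj
    obtain ⟨_, hdw⟩ := Finset.mem_filter.1 hd
    have e1 : n * d 0 + m * d 1 = n * d0 0 + m * d0 1 := hdw.trans hd0w.symm
    have e2 : p * d 0 + q * d 1 = p * d0 0 + q * d0 1 := by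
      apply Nat.eq_of_mul_eq_mul_left hg
      calc g * (p * d 0 + q * d 1) = (g * p) * d 0 + (g * q) * d 1 := by ring
        _ = n * d 0 + m * d 1 := by rw [← hp, ← hq]
        _ = n * d0 0 + m * d0 1 := e1
        _ = (g * p) * d0 0 + (g * q) * d0 1 := by rw [← hp, ← hq]
        _ = _ := by ring
    have e3 : q * d 1 ≡ q * d0 1 [MOD p] := by
      have a1 : p * d 0 + q * d 1 ≡ q * d 1 [MOD p] := by simp [Nat.ModEq]
      have a2 : p * d0 0 + q * d0 1 ≡ q * d0 1 [MOD p] := by simp [Nat.ModEq]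
      exact a1.symm.trans ((congrArg (· % p) e2).trans a2)
    have e4 := Nat.ModEq.cancel_left_of_coprime (by exact hpq) e3
    rw [← hd0j]
    exact e4
  have hcard : p * (J.card - 1) ≤ jm := by
    have hinj : Set.InjOn (fun j => j / p) (J : Set ℕ) := by
      intro x hx y hy hxy
      have h1 := (hcong x hx).trans (hcong y hy).symm
      have h2 : x / p = y / p := hxy
      rw [← Nat.div_add_mod x p, ← Nat.div_add_mod y p, h2, h1]
    have h1 : (J.image (fun j => j / p)).card = J.card := Finset.card_image_of_injOn hinj
    have h2 : J.image (fun j => j / p) ⊆ Finset.range (jm / p + 1) := by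
      intro x hx
      obtain ⟨j, hj, rfl⟩ := Finset.mem_image.1 hx
      rw [Finset.mem_range]
      have : j / p ≤ jm / p := Nat.div_le_div_right (c := p) (J.le_max' j hj)
      change j / p < jm / p + 1
      omega
    have h3 := Finset.card_le_card h2
    rw [h1, Finset.card_range] at h3
    calc p * (J.card - 1) ≤ p * (jm / p) := Nat.mul_le_mul_left _ (Nat.sub_le_iff_le_add.mpr h3)
      _ ≤ jm := Nat.mul_div_le jm p
  obtain ⟨Q', hQ'c, hQ'v⟩ := iter φ l hz Q (J.erase jm)
  rw [Finset.card_erase_of_mem hjmJ, hvQ, ← hn', ← hm'] at hQ'v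
  have hsub : ∀ d ∈ Q'.support, d ∈ Q.support := by
    intro d hd
    rw [mem_support_iff, hQ'c] at hd
    exact mem_support_iff.2 (right_ne_zero_of_mul hd)
  have htop := top_coeff φ l hz Q' N (fun d hd => hmax d (hsub d hd))
  have hS' : ∀ d ∈ Q'.support.filter (fun d => vd (φ (X 0)) * d 0 + vd (φ (X 1)) * d 1 = N),
      d 1 = d0 1 ∧ d 0 = d0 0 := by
    intro d hd
    obtain ⟨hd1, hd2⟩ := Finset.mem_filter.1 hd
    have hdJ : d 1 ∈ J := Finset.mem_image.2 ⟨d, Finset.mem_filter.2 ⟨hsub d hd1, hd2⟩, rfl⟩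
    have h1 : d 1 = d0 1 := by
      rw [hd0j]
      by_contra hne'
      rw [mem_support_iff, hQ'c] at hd1
      apply left_ne_zero_of_mul hd1
      exact Finset.prod_eq_zero (Finset.mem_erase.2 ⟨hne', hdJ⟩) (sub_self _)
    refine ⟨h1, ?_⟩
    have e1 : n * d 0 + m * d 1 = n * d0 0 + m * d0 1 := hd2.trans hd0w.symm
    rw [h1] at e1
    exact Nat.eq_of_mul_eq_mul_left hn (by omega)
  have hd0Q' : d0 ∈ Q'.support := by
    rw [mem_support_iff, hQ'c]
    refine mul_ne_zero ?_ (mem_support_iff.1 hd0s)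
    rw [Finset.prod_ne_zero_iff]
    intro j hj
    rw [hd0j, sub_ne_zero]
    exact_mod_cast (Finset.ne_of_mem_erase hj).symm
  have hfac : (Th (φ Q')).coeff N = ld (φ (X 0)) ^ d0 0 * ld (φ (X 1)) ^ d0 1 *
      ∑ d ∈ Q'.support with vd (φ (X 0)) * d 0 + vd (φ (X 1)) * d 1 = N,
        (C (Q'.coeff d) * (C l * X 2) ^ d 2) := by
    rw [htop, Finset.mul_sum]
    refine Finset.sum_congr rfl fun d hd => ?_
    rw [(hS' d hd).1, (hS' d hd).2]
  have hnz : (Th (φ Q')).coeff N ≠ 0 := by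
    rw [hfac]
    refine mul_ne_zero (mul_ne_zero (pow_ne_zero _ (ld_ne _ (by simp)))
      (pow_ne_zero _ (ld_ne _ (by simp)))) ?_
    intro h0
    have h1 := congrArg (coeff (Finsupp.single 2 (d0 2))) h0
    rw [coeff_sum, Finset.sum_eq_single d0] at h1
    · rw [mul_pow, ← C_pow, coeff_C_mul, coeff_C_mul, coeff_X_pow] at h1
      simp [hl] at h1
      exact (mem_support_iff.1 hd0Q') h1
    · intro d hd hdne
      rw [mul_pow, ← C_pow, coeff_C_mul, coeff_C_mul, coeff_X_pow]
      rw [if_neg]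
      · simp
      · intro he
        apply hdne
        have h2 : d 2 = d0 2 := by
          have := DFunLike.congr_fun he 2
          simpa using this
        ext i
        fin_cases i
        · exact (hS' d hd).2
        · exact (hS' d hd).1
        · exact h2
    · intro h
      exact absurd (Finset.mem_filter.2 ⟨hd0Q', hd0w⟩) h
  have hNle : N ≤ vd (φ Q') := Polynomial.le_natDegree_of_ne_zero hnz
  have hfinal := hNle.trans hQ'v
  set t := J.card - 1
  have hNj : m * (p * t) ≤ N := by
    have : m * (p * t) ≤ m * d0 1 := Nat.mul_le_mul_left _ (hd0j ▸ hcard)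
    have h2 : N = n * d0 0 + m * d0 1 := hd0w.symm
    omega
  rcases Nat.eq_zero_or_pos t with ht | ht
  · rw [ht] at hfinal; omega
  · have h3 : n + m ≤ m * p := by
      have : n + m = g * (p + q) := by rw [mul_add, ← hp, ← hq]
      rw [this]
      have : m * p = g * (q * p) := by rw [← mul_assoc, ← hq]
      rw [this]
      apply Nat.mul_le_mul_left
      nlinarith
    have h4 : t * (n + m - 2) + 2 * t ≤ m * (p * t) := by
      calc t * (n + m - 2) + 2 * t = t * ((n + m - 2) + 2) := by ring
        _ = t * (n + m) := by rw [Nat.sub_add_cancel (by omega)]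
        _ ≤ t * (m * p) := Nat.mul_le_mul_left _ h3
        _ = _ := by ring
    omega

end GT
namespace GT

open MvPolynomial

variable {K : Type*} [Field K]

lemma weight_eq (a b c : ℕ) (d : Fin 3 →₀ ℕ) :
    Finsupp.weight ![(a : ℤ), (b : ℤ), -(c : ℤ)] d = d 0 * a + d 1 * b - d 2 * c := by
  rw [Finsupp.weight_apply, Finsupp.sum_fintype _ _ (by simp), Fin.sum_univ_three]
  simp
  ring

lemma graded_of (w : Fin 3 → ℤ) (e : MvPolynomial (Fin 3) K ≃ₐ[K] MvPolynomial (Fin 3) K)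
    (h : ∀ i, (e (X i)).IsWeightedHomogeneous w (w i)) : IsGraded w e := by
  intro D f hf
  rw [f.as_sum, map_sum]
  apply IsWeightedHomogeneous.sum
  intro d hd
  have hw := hf (mem_support_iff.1 hd)
  have hC : e (C (coeff d f)) = C (coeff d f) := e.commutes _
  rw [monomial_eq, Finsupp.prod_fintype _ _ (by simp), map_mul, hC, map_prod]
  apply IsWeightedHomogeneous.C_mul
  rw [← hw, Finsupp.weight_apply, Finsupp.sum_fintype _ _ (by simp)]
  apply IsWeightedHomogeneous.prod
  intro i _
  rw [map_pow]
  exact (h i).pow _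

/-- the monomial shear `X i ↦ X i + μ X_j^q X_2^s` -/
noncomputable def shearHom (i j : Fin 3) (q s : ℕ) (μ : K) :
    MvPolynomial (Fin 3) K →ₐ[K] MvPolynomial (Fin 3) K :=
  aeval (Function.update X i (X i + C μ * (X j ^ q * X 2 ^ s)))

lemma shearHom_self (i j : Fin 3) (q s : ℕ) (μ : K) :
    shearHom i j q s μ (X i) = X i + C μ * (X j ^ q * X 2 ^ s) := by
  simp [shearHom]

lemma shearHom_ne (i j : Fin 3) (q s : ℕ) (μ : K) (k : Fin 3) (h : k ≠ i) :
    shearHom i j q s μ (X k) = X k := by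
  simp [shearHom, h]

lemma shearHom_comp (i j : Fin 3) (hj : j ≠ i) (h2 : 2 ≠ i) (q s : ℕ) (μ ν : K) (h : μ + ν = 0) :
    (shearHom i j q s μ).comp (shearHom i j q s ν) = AlgHom.id K _ := by
  apply MvPolynomial.algHom_ext
  intro k
  rw [AlgHom.comp_apply]
  by_cases hk : k = i
  · subst hk
    have hC : shearHom k j q s μ (C ν) = C ν := (shearHom k j q s μ).commutes ν
    have h' : (C μ + C ν : MvPolynomial (Fin 3) K) = 0 := by rw [← C_add, h, C_0]
    rw [shearHom_self, map_add, map_mul, map_mul, map_pow, map_pow, shearHom_self,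
      shearHom_ne _ _ _ _ _ _ hj, shearHom_ne _ _ _ _ _ _ h2, hC, AlgHom.id_apply]
    linear_combination (X j ^ q * X 2 ^ s) * h'
  · rw [shearHom_ne _ _ _ _ _ _ hk, shearHom_ne _ _ _ _ _ _ hk, AlgHom.id_apply]

noncomputable def shear (i j : Fin 3) (hj : j ≠ i) (h2 : 2 ≠ i) (q s : ℕ) (μ : K) :
    MvPolynomial (Fin 3) K ≃ₐ[K] MvPolynomial (Fin 3) K :=
  AlgEquiv.ofAlgHom (shearHom i j q s μ) (shearHom i j q s (-μ))
    (shearHom_comp i j hj h2 q s _ _ (by ring)) (shearHom_comp i j hj h2 q s _ _ (by ring))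

lemma shear_apply (i j : Fin 3) (hj : j ≠ i) (h2 : 2 ≠ i) (q s : ℕ) (μ : K)
    (u : MvPolynomial (Fin 3) K) : shear i j hj h2 q s μ u = shearHom i j q s μ u := rfl

lemma shear_elem (i j : Fin 3) (hj : j ≠ i) (h2 : 2 ≠ i) (q s : ℕ) (μ : K) :
    IsElementary (shear i j hj h2 q s μ) := by
  refine ⟨i, C μ * (X j ^ q * X 2 ^ s), ?_, ?_, ?_⟩
  · intro hmem
    have h1 := vars_mul _ _ hmem
    rw [vars_C, Finset.empty_union] at h1
    have h3 := vars_mul _ _ h1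
    rcases Finset.mem_union.1 h3 with h | h
    · have := vars_pow _ _ h
      rw [vars_X, Finset.mem_singleton] at this
      exact hj this.symm
    · have := vars_pow _ _ h
      rw [vars_X, Finset.mem_singleton] at this
      exact h2 this.symm
  · rw [shear_apply, shearHom_self]
  · intro k hk
    rw [shear_apply, shearHom_ne _ _ _ _ _ _ hk]

lemma shear_graded (w : Fin 3 → ℤ) (i j : Fin 3) (hj : j ≠ i) (h2 : 2 ≠ i) (q s : ℕ) (μ : K)
    (hw : w i = q * w j + s * w 2) : IsGraded w (shear i j hj h2 q s μ) := by
  apply graded_of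
  intro k
  rw [shear_apply]
  by_cases hk : k = i
  · subst hk
    rw [shearHom_self]
    refine (isWeightedHomogeneous_X K w k).add (IsWeightedHomogeneous.C_mul ?_ _)
    have := ((isWeightedHomogeneous_X K w j).pow q).mul ((isWeightedHomogeneous_X K w 2).pow s)
    rw [hw]
    simpa using this
  · rw [shearHom_ne _ _ _ _ _ _ hk]
    exact isWeightedHomogeneous_X K w k

lemma reduce (w : Fin 3 → ℤ) (i j : Fin 3) (hj : j ≠ i) (h2 : 2 ≠ i) (q s : ℕ) (μ : K)
    (hw : w i = q * w j + s * w 2) (φ : MvPolynomial (Fin 3) K ≃ₐ[K] MvPolynomial (Fin 3) K)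
    (hφ : IsGraded w φ) :
    ∃ ψ : MvPolynomial (Fin 3) K ≃ₐ[K] MvPolynomial (Fin 3) K, IsGraded w ψ ∧
      ψ (X i) = φ (X i) - C μ * (φ (X j) ^ q * φ (X 2) ^ s) ∧
      (∀ k, k ≠ i → ψ (X k) = φ (X k)) ∧ (IsGradedTame w ψ → IsGradedTame w φ) := by
  have hC : φ (C (-μ)) = C (-μ) := φ.commutes _
  refine ⟨φ * shear i j hj h2 q s (-μ), ?_, ?_, ?_, ?_⟩
  · intro D f hf
    exact hφ D _ (shear_graded w i j hj h2 q s (-μ) hw D f hf)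
  · rw [AlgEquiv.mul_apply, shear_apply, shearHom_self, map_add, map_mul, map_mul, map_pow, map_pow,
      hC, C_neg]
    ring
  · intro k hk
    rw [AlgEquiv.mul_apply, shear_apply, shearHom_ne _ _ _ _ _ _ hk]
  · rintro ⟨L, hL, hprod⟩
    refine ⟨L ++ [shear i j hj h2 q s μ], ?_, ?_⟩
    · intro e he
      rcases List.mem_append.1 he with h | h
      · exact hL e h
      · rw [List.mem_singleton] at h
        subst h
        exact ⟨shear_graded w i j hj h2 q s μ hw, Or.inl (shear_elem i j hj h2 q s μ)⟩
    · rw [List.prod_append, ← hprod, List.prod_singleton]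
      ext1 u
      change φ u = φ (shearHom i j q s (-μ) (shearHom i j q s μ u))
      rw [← AlgHom.comp_apply, shearHom_comp i j hj h2 q s _ _ (by ring)]
      rfl

lemma wh_coeff_Th {w : Fin 3 → ℤ} {D : ℤ} {u : MvPolynomial (Fin 3) K}
    (h : u.IsWeightedHomogeneous w D) (k : ℕ) : ((Th u).coeff k).IsWeightedHomogeneous w D := by
  intro d hd
  rw [coeff_Th] at hd
  split_ifs at hd with h1
  · exact h hd
  · exact absurd rfl hd

lemma euler (a b c : ℕ) (D : ℤ) (u : MvPolynomial (Fin 3) K)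
    (h : u.IsWeightedHomogeneous ![(a : ℤ), (b : ℤ), -(c : ℤ)] D) :
    C (a : K) * E 0 u + C (b : K) * E 1 u - C (c : K) * E 2 u = C (D : K) * u := by
  ext d
  simp only [coeff_sub, coeff_add, coeff_C_mul, coeff_E]
  by_cases hd : u.coeff d = 0
  · simp [hd]
  have := h hd
  rw [weight_eq] at this
  rw [← this]
  push_cast
  ring

lemma euler_v (u : MvPolynomial (Fin 3) K) : E 0 (ld u) + E 1 (ld u) = C (vd u : K) * ld u := by
  ext d
  rw [coeff_add, coeff_E, coeff_E, coeff_C_mul, ld, Polynomial.leadingCoeff, coeff_Th]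
  split_ifs with h
  · rw [vd, ← h]; push_cast; ring
  · simp

lemma prop_lead [CharZero K] (a b c : ℕ) (hc : 0 < c) (A B : ℤ) (u v : MvPolynomial (Fin 3) K)
    (hu : u.IsWeightedHomogeneous ![(a : ℤ), (b : ℤ), -(c : ℤ)] A)
    (hv : v.IsWeightedHomogeneous ![(a : ℤ), (b : ℤ), -(c : ℤ)] B) (q s : ℕ)
    (hAB : B = q * A - s * c) (hu0 : u ≠ 0) (hv0 : v ≠ 0) (hpos : 0 < vd u)
    (hvd : vd v = q * vd u)
    (hbr : E 0 (ld u) * E 1 (ld v) - E 1 (ld u) * E 0 (ld v) = 0) :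
    ∃ μ : K, ld v = C μ * (ld u ^ q * X 2 ^ s) := by
  have hlu := ld_ne u hu0
  have hlv := ld_ne v hv0
  have hF0 : ld u ^ q * X 2 ^ s ≠ 0 := mul_ne_zero (pow_ne_zero _ hlu) (pow_ne_zero _ (X_ne_zero _))
  apply proportional _ _ hlv hF0
  have hFh : (ld u ^ q * X 2 ^ s).IsWeightedHomogeneous ![(a : ℤ), (b : ℤ), -(c : ℤ)] B := by
    have h1 := ((wh_coeff_Th hu (Th u).natDegree).pow q).mul
      ((isWeightedHomogeneous_X K ![(a : ℤ), (b : ℤ), -(c : ℤ)] 2).pow s)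
    have h2 : q • A + s • (![(a : ℤ), (b : ℤ), -(c : ℤ)] 2) = B := by
      rw [hAB]; simp; ring
    rw [h2] at h1
    exact h1
  have eF := euler a b c B _ hFh
  have ev := euler a b c B (ld v) (wh_coeff_Th hv _)
  have du := euler_v u
  have dv := euler_v v
  have hn0 : (C (vd u : K) : MvPolynomial (Fin 3) K) ≠ 0 := by
    simp; omega
  have hX : ∀ k : Fin 3, k ≠ 2 → E k (ld u ^ q * X 2 ^ s) = E k (ld u ^ q) * X 2 ^ s := by
    intro k hk
    have : E k (X 2 ^ s : MvPolynomial (Fin 3) K) = 0 := by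
      simp [E, pderiv_X_of_ne hk.symm]
    rw [E_mul, this]; ring
  have hdvC : (C (vd v : K) : MvPolynomial (Fin 3) K) = (q : MvPolynomial (Fin 3) K) * C (vd u : K) := by
    rw [hvd]; simp
  rw [hdvC] at dv
  have k1 : ld u * E 1 (ld v) = q * ld v * E 1 (ld u) := by
    apply mul_left_cancel₀ hn0
    linear_combination (-E 1 (ld v)) * du + E 1 (ld u) * dv + hbr
  have k0 : ld u * E 0 (ld v) = q * ld v * E 0 (ld u) := by
    apply mul_left_cancel₀ hn0
    linear_combination (-E 0 (ld v)) * du + E 0 (ld u) * dv - hbr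
  have r : ∀ k : Fin 3, k ≠ 2 → ld u * E k (ld v) = q * ld v * E k (ld u) →
      E k (ld v) * (ld u ^ q * X 2 ^ s) = ld v * E k (ld u ^ q * X 2 ^ s) := by
    intro k hk hh
    rw [hX k hk]
    apply mul_left_cancel₀ hlu
    have := E_pow_mul k (ld u) q
    linear_combination (ld u ^ q * X 2 ^ s) * hh - (ld v * X 2 ^ s) * this
  have r0 := r 0 (by decide) k0
  have r1 := r 1 (by decide) k1
  have hc0 : (C (c : K) : MvPolynomial (Fin 3) K) ≠ 0 := by
    simp; omega
  have r2 : E 2 (ld v) * (ld u ^ q * X 2 ^ s) = ld v * E 2 (ld u ^ q * X 2 ^ s) := by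
    apply mul_left_cancel₀ hc0
    linear_combination (-(ld u ^ q * X 2 ^ s)) * ev + ld v * eF + C (a : K) * r0 + C (b : K) * r1
  intro k
  fin_cases k
  · exact r0
  · exact r1
  · exact r2

lemma bracket_lead (φ : MvPolynomial (Fin 3) K ≃ₐ[K] MvPolynomial (Fin 3) K) (l : K)
    (hz : φ (X 2) = C l * X 2) (h : 2 < vd (φ (X 0)) + vd (φ (X 1))) :
    E 0 (ld (φ (X 0))) * E 1 (ld (φ (X 1))) - E 1 (ld (φ (X 0))) * E 0 (ld (φ (X 1))) = 0 := by
  obtain ⟨j, hj, hp⟩ := poisson φ l hz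
  have h1 := hp (X 1)
  rw [pderiv_X_self, map_one] at h1
  have h2 : (Th (C j * (X 0 * X 1) * (1 : MvPolynomial (Fin 3) K))).coeff
      (vd (φ (X 0)) + vd (φ (X 1))) = 0 := by
    apply Polynomial.coeff_eq_zero_of_natDegree_lt
    have := vd_CX j hj (1 : MvPolynomial (Fin 3) K) one_ne_zero
    rw [vd] at this
    rw [this]
    have : vd (1 : MvPolynomial (Fin 3) K) = 0 := by rw [← C_1, vd_C]
    omega
  rw [← h1, map_sub, map_mul, map_mul, Polynomial.coeff_sub,
    Polynomial.coeff_mul_add_eq_of_natDegree_le (vd_E _ _) (vd_E _ _),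
    Polynomial.coeff_mul_add_eq_of_natDegree_le (vd_E _ _) (vd_E _ _), Th_E, Th_E, Th_E, Th_E] at h2
  exact h2

lemma ld_mem (u : MvPolynomial (Fin 3) K) (hu : u ≠ 0) :
    ∃ d : Fin 3 →₀ ℕ, d 0 + d 1 = vd u ∧ u.coeff d ≠ 0 := by
  obtain ⟨d, hd⟩ := exists_coeff_ne_zero (ld_ne u hu)
  rw [ld, Polynomial.leadingCoeff, coeff_Th] at hd
  split_ifs at hd with h
  · exact ⟨d, h, hd⟩
  · exact absurd rfl hd

end GT
namespace GT

open MvPolynomial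

variable {K : Type*} [Field K]

lemma z_image (a b c : ℕ) (hc : 0 < c)
    (φ : MvPolynomial (Fin 3) K ≃ₐ[K] MvPolynomial (Fin 3) K)
    (hφ : IsGraded ![(a : ℤ), (b : ℤ), -(c : ℤ)] φ) : ∃ l : K, φ (X 2) = C l * X 2 := by
  have hh := hφ _ _ (isWeightedHomogeneous_X K ![(a : ℤ), (b : ℤ), -(c : ℤ)] 2)
  have hdvd : (X 2 : MvPolynomial (Fin 3) K) ∣ φ (X 2) := by
    rw [(φ (X 2)).as_sum]
    apply Finset.dvd_sum
    intro d hd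
    rw [X_dvd_monomial]
    right
    intro h0
    have := hh (mem_support_iff.1 hd)
    rw [weight_eq, h0] at this
    simp at this
    have h1 : (0 : ℤ) ≤ d 0 * a := by positivity
    have h2 : (0 : ℤ) ≤ d 1 * b := by positivity
    omega
  obtain ⟨u, hu⟩ := hdvd
  have hirr : Irreducible (φ (X 2)) := by
    have h1 : Irreducible (X 2 : MvPolynomial (Fin 3) K) := (X_prime).irreducible
    exact (MulEquiv.irreducible_iff φ).2 h1
  have hunit : IsUnit u := by
    rcases hirr.isUnit_or_isUnit hu with h | h
    · exact absurd h (X_prime).not_isUnit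
    · exact h
  obtain ⟨r, _, h⟩ := isUnit_iff_eq_C_of_isReduced.1 hunit
  exact ⟨r, by rw [hu, h, mul_comm]⟩

lemma vd_one_mod (a b c k : ℕ) (hb : 0 < b) (hbc : Nat.gcd b c = 1) (hk : a = b + c * k)
    (D : ℕ) (hD : D = a ∨ D = b) (u : MvPolynomial (Fin 3) K) (hu : u ≠ 0)
    (h : u.IsWeightedHomogeneous ![(a : ℤ), (b : ℤ), -(c : ℤ)] D) :
    ∃ r : ℕ, vd u = 1 + c * r := by
  obtain ⟨d, hd1, hd2⟩ := ld_mem u hu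
  have hw := h hd2
  rw [weight_eq] at hw
  have hpos : 1 ≤ vd u := by
    by_contra hlt
    have h0 : d 0 = 0 := by omega
    have h1 : d 1 = 0 := by omega
    rw [h0, h1] at hw
    have h2 : (0 : ℤ) ≤ d 2 * c := by positivity
    have h3 : 0 < D := by rcases hD with h | h <;> omega
    simp at hw
    omega
  have hdvd : (c : ℤ) ∣ (vd u : ℤ) - 1 := by
    have hco : IsCoprime (c : ℤ) (b : ℤ) := by
      rw [Nat.isCoprime_iff_coprime]
      exact Nat.Coprime.symm hbc
    apply hco.dvd_of_dvd_mul_left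
    have hDb : ∃ e : ℤ, (D : ℤ) = b + c * e := by
      rcases hD with h | h
      · exact ⟨k, by rw [h, hk]; push_cast; ring⟩
      · exact ⟨0, by rw [h]; ring⟩
    obtain ⟨e, he⟩ := hDb
    refine ⟨e - k * d 0 + d 2, ?_⟩
    rw [← hd1]
    rw [he, hk] at hw
    push_cast at hw ⊢
    linear_combination hw
  obtain ⟨r, hr⟩ : c ∣ vd u - 1 := by
    have : ((vd u - 1 : ℕ) : ℤ) = (vd u : ℤ) - 1 := by omega
    rw [← this] at hdvd
    exact_mod_cast hdvd
  exact ⟨r, by omega⟩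

lemma quot_mod (c r1 r2 q : ℕ) (h : 1 + c * r2 = q * (1 + c * r1)) : ∃ r, q = 1 + c * r := by
  have hq : 1 ≤ q := by
    rcases Nat.eq_zero_or_pos q with h0 | h0
    · subst h0; simp at h
    · exact h0
  have : (c : ℤ) ∣ (q : ℤ) - 1 := by
    refine ⟨r2 - q * r1, ?_⟩
    have h' : (1 + c * r2 : ℤ) = q * (1 + c * r1) := by exact_mod_cast h
    linear_combination -h'
  have h2 : ((q - 1 : ℕ) : ℤ) = (q : ℤ) - 1 := by omega
  rw [← h2] at this
  obtain ⟨r, hr⟩ : c ∣ q - 1 := by exact_mod_cast this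
  exact ⟨r, by omega⟩

/-- one reduction step on variable `i` -/
lemma red_step [CharZero K] (a b c : ℕ) (hc : 0 < c) (i j : Fin 3) (hj : j ≠ i) (h2i : 2 ≠ i)
    (h2j : 2 ≠ j)
    (φ : MvPolynomial (Fin 3) K ≃ₐ[K] MvPolynomial (Fin 3) K)
    (hφ : IsGraded ![(a : ℤ), (b : ℤ), -(c : ℤ)] φ) (l : K) (hz : φ (X 2) = C l * X 2)
    (q s : ℕ) (hw : ![(a : ℤ), (b : ℤ), -(c : ℤ)] i =
      q * ![(a : ℤ), (b : ℤ), -(c : ℤ)] j + s * ![(a : ℤ), (b : ℤ), -(c : ℤ)] 2)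
    (hvd : vd (φ (X i)) = q * vd (φ (X j))) (hpi : 0 < vd (φ (X i))) (hpj : 0 < vd (φ (X j)))
    (hbr : E 0 (ld (φ (X j))) * E 1 (ld (φ (X i))) - E 1 (ld (φ (X j))) * E 0 (ld (φ (X i))) = 0) :
    ∃ ψ : MvPolynomial (Fin 3) K ≃ₐ[K] MvPolynomial (Fin 3) K,
      IsGraded ![(a : ℤ), (b : ℤ), -(c : ℤ)] ψ ∧ ψ (X 2) = C l * X 2 ∧
      vd (ψ (X i)) < vd (φ (X i)) ∧ ψ (X j) = φ (X j) ∧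
      (IsGradedTame ![(a : ℤ), (b : ℤ), -(c : ℤ)] ψ →
        IsGradedTame ![(a : ℤ), (b : ℤ), -(c : ℤ)] φ) := by
  have hl : l ≠ 0 := by
    rintro rfl
    have : φ (X 2) = 0 := by rw [hz]; simp
    simp at this
  have hi0 : φ (X i) ≠ 0 := by simp
  have hj0 : φ (X j) ≠ 0 := by simp
  obtain ⟨μ, hμ⟩ := prop_lead a b c hc _ _ (φ (X j)) (φ (X i))
    (hφ _ _ (isWeightedHomogeneous_X K _ j)) (hφ _ _ (isWeightedHomogeneous_X K _ i)) q s
    (by rw [hw]; simp; ring) hj0 hi0 hpj hvd hbr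
  have hμ0 : μ ≠ 0 := by
    rintro rfl
    apply ld_ne _ hi0
    rw [hμ]; simp
  obtain ⟨ψ, g1, g2, g3, g4⟩ := reduce _ i j hj h2i q s (μ * (l⁻¹) ^ s) hw φ hφ
  refine ⟨ψ, g1, (g3 2 h2i).trans hz, ?_, g3 j hj, g4⟩
  have hsimp : C (μ * (l⁻¹) ^ s) * (φ (X j) ^ q * φ (X 2) ^ s) = C μ * (φ (X j) ^ q * X 2 ^ s) := by
    rw [hz]
    have : (C (l⁻¹) * C l : MvPolynomial (Fin 3) K) = 1 := by
      rw [← C_mul, inv_mul_cancel₀ hl, C_1]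
    calc C (μ * (l⁻¹) ^ s) * (φ (X j) ^ q * (C l * X 2) ^ s)
        = (C (l⁻¹) * C l) ^ s * (C μ * (φ (X j) ^ q * X 2 ^ s)) := by
          rw [C_mul, C_pow]; ring
      _ = _ := by rw [this, one_pow, one_mul]
  rw [g2, hsimp]
  apply vd_sub_lt _ _ _ _ hpi
  · have hX : (X 2 ^ s : MvPolynomial (Fin 3) K) ≠ 0 := pow_ne_zero _ (X_ne_zero _)
    have hp : φ (X j) ^ q ≠ 0 := pow_ne_zero _ hj0
    rw [vd_mul _ _ (by simpa using hμ0) (mul_ne_zero hp hX), vd_mul _ _ hp hX, vd_C, vd_pow, vd_pow,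
      vd_X2, hvd]
    ring
  · rw [hμ, ld_mul, ld_mul, ld_C, ld_pow, ld_pow, ld_X2]

lemma eq_C_mul_X (u : MvPolynomial (Fin 3) K) (i : Fin 3)
    (h : ∀ d, u.coeff d ≠ 0 → d = Finsupp.single i 1) : ∃ r : K, u = C r * X i := by
  refine ⟨u.coeff (Finsupp.single i 1), ?_⟩
  ext d
  rw [coeff_C_mul, coeff_X]
  split_ifs with hd
  · rw [hd, mul_one]
  · rw [mul_zero]
    by_contra hne
    exact hd (h d hne).symm

lemma base [CharZero K] (a b c k : ℕ) (hb : 0 < b) (hc : 0 < c) (hk : a = b + c * k) (hk1 : 1 ≤ k)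
    (φ : MvPolynomial (Fin 3) K ≃ₐ[K] MvPolynomial (Fin 3) K)
    (hφ : IsGraded ![(a : ℤ), (b : ℤ), -(c : ℤ)] φ) (l : K) (hz : φ (X 2) = C l * X 2)
    (h0 : vd (φ (X 0)) = 1) (h1 : vd (φ (X 1)) = 1) :
    IsGradedTame ![(a : ℤ), (b : ℤ), -(c : ℤ)] φ := by
  have hl : l ≠ 0 := by
    rintro rfl
    have : φ (X 2) = 0 := by rw [hz]; simp
    simp at this
  have hck : (0 : ℤ) < c * k := by positivity
  have hb' : (0 : ℤ) < b := by exact_mod_cast hb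
  have hc' : (0 : ℤ) < c := by exact_mod_cast hc
  have hf := hφ _ _ (isWeightedHomogeneous_X K _ 0)
  obtain ⟨α, hα⟩ := eq_C_mul_X (φ (X 0)) 0 (by
    intro d hd
    have hv := vd_mem _ d hd
    have hw := hf hd
    rw [weight_eq] at hw
    simp [hk] at hw
    have hnn : (0 : ℤ) ≤ d 2 * c := by positivity
    have hd1 : d 1 = 0 := by
      by_contra hne
      have e1 : d 1 = 1 := by omega
      have e0 : d 0 = 0 := by omega
      rw [e1, e0] at hw
      push_cast at hw
      nlinarith
    have hd0 : d 0 = 1 := by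
      by_contra hne
      have e0 : d 0 = 0 := by omega
      rw [hd1, e0] at hw
      push_cast at hw
      nlinarith
    have hd2 : d 2 = 0 := by
      rw [hd1, hd0] at hw
      push_cast at hw
      have : (d 2 : ℤ) * c = 0 := by linarith
      rcases mul_eq_zero.1 this with h | h
      · exact_mod_cast h
      · omega
    ext i
    fin_cases i <;> simp [hd0, hd1, hd2])
  have hα0 : α ≠ 0 := by
    rintro rfl
    have : φ (X 0) = 0 := by rw [hα]; simp
    simp at this
  set e : Fin 3 →₀ ℕ := Finsupp.single 0 1 + Finsupp.single 2 k with he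
  obtain ⟨ψ, g1, g2, g3, g4⟩ := reduce ![(a : ℤ), (b : ℤ), -(c : ℤ)] 1 0 (by decide) (by decide) 1 k
    ((φ (X 1)).coeff e / (α * l ^ k)) (by simp [hk]; ring) φ hφ
  apply g4
  have hψ0 : ψ (X 0) = C α * X 0 := (g3 0 (by decide)).trans hα
  have hψ2 : ψ (X 2) = C l * X 2 := (g3 2 (by decide)).trans hz
  have hg := g1 _ _ (isWeightedHomogeneous_X K _ 1)
  have hmon : C ((φ (X 1)).coeff e / (α * l ^ k)) * (φ (X 0) ^ 1 * φ (X 2) ^ k) =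
      monomial e ((φ (X 1)).coeff e) := by
    have hm : (monomial e ((φ (X 1)).coeff e) : MvPolynomial (Fin 3) K) =
        C ((φ (X 1)).coeff e) * (X 0 * X 2 ^ k) := by
      rw [monomial_eq, Finsupp.prod_fintype _ _ (by simp), Fin.prod_univ_three, he]
      simp
    rw [hm, hα, hz]
    have : (φ (X 1)).coeff e = (φ (X 1)).coeff e / (α * l ^ k) * (α * l ^ k) := by
      field_simp
    conv_rhs => rw [this]
    simp only [C_mul, C_pow]
    ring
  rw [hmon] at g2
  have hce : (ψ (X 1)).coeff e = 0 := by
    rw [g2, coeff_sub, coeff_monomial]; simp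
  have hvg : ∀ d, (ψ (X 1)).coeff d ≠ 0 → d 0 + d 1 ≤ 1 := by
    intro d hd
    by_cases hde : e = d
    · rw [← hde] at hd; exact absurd hce hd
    · rw [g2, coeff_sub, coeff_monomial, if_neg hde, sub_zero] at hd
      rw [← h1]
      exact vd_mem _ d hd
  obtain ⟨β, hβ⟩ := eq_C_mul_X (ψ (X 1)) 1 (by
    intro d hd
    have hv := hvg d hd
    have hw := hg hd
    rw [weight_eq] at hw
    simp [hk] at hw
    have hnn : (0 : ℤ) ≤ d 2 * c := by positivity
    have hd0 : d 0 = 0 := by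
      by_contra hne
      have e0 : d 0 = 1 := by omega
      have e1 : d 1 = 0 := by omega
      rw [e1, e0] at hw
      push_cast at hw
      have e2 : d 2 = k := by
        have : (c : ℤ) * d 2 = c * k := by linarith
        exact_mod_cast mul_left_cancel₀ hc'.ne' this
      apply hd
      have : d = e := by
        ext i
        fin_cases i <;> simp [he, e0, e1, e2]
      rw [this, hce]
    have hd1 : d 1 = 1 := by
      by_contra hne
      have e1 : d 1 = 0 := by omega
      rw [hd0, e1] at hw
      push_cast at hw
      nlinarith
    have hd2 : d 2 = 0 := by
      rw [hd1, hd0] at hw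
      push_cast at hw
      have : (d 2 : ℤ) * c = 0 := by linarith
      rcases mul_eq_zero.1 this with h | h
      · exact_mod_cast h
      · omega
    ext i
    fin_cases i <;> simp [hd0, hd1, hd2])
  refine ⟨[ψ], ?_, by simp⟩
  intro χ hχ
  rw [List.mem_singleton] at hχ
  subst hχ
  refine ⟨g1, Or.inr ?_⟩
  intro i
  fin_cases i
  · exact ⟨![α, 0, 0], by simp [Fin.sum_univ_three, hψ0]⟩
  · exact ⟨![0, β, 0], by simp [Fin.sum_univ_three, hβ]⟩
  · exact ⟨![0, 0, l], by simp [Fin.sum_univ_three, hψ2]⟩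

lemma main [CharZero K] (a b c k : ℕ) (hb : 0 < b) (hc : 0 < c) (hbc : Nat.gcd b c = 1)
    (hk : a = b + c * k) (hk1 : 1 ≤ k) (hkb : k ≤ b) (l : K) (N : ℕ) :
    ∀ φ : MvPolynomial (Fin 3) K ≃ₐ[K] MvPolynomial (Fin 3) K,
    IsGraded ![(a : ℤ), (b : ℤ), -(c : ℤ)] φ → φ (X 2) = C l * X 2 →
    vd (φ (X 0)) + vd (φ (X 1)) = N → IsGradedTame ![(a : ℤ), (b : ℤ), -(c : ℤ)] φ := by
  induction N using Nat.strong_induction_on with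
  | _ N ih =>
  intro φ hφ hz hN
  obtain ⟨r0, hr0⟩ := vd_one_mod a b c k hb hbc hk a (Or.inl rfl) (φ (X 0)) (by simp)
    (hφ _ _ (isWeightedHomogeneous_X K ![(a : ℤ), (b : ℤ), -(c : ℤ)] 0))
  obtain ⟨r1, hr1⟩ := vd_one_mod a b c k hb hbc hk b (Or.inr rfl) (φ (X 1)) (by simp)
    (hφ _ _ (isWeightedHomogeneous_X K ![(a : ℤ), (b : ℤ), -(c : ℤ)] 1))
  have hp0 : 0 < vd (φ (X 0)) := by rw [hr0]; omega
  have hp1 : 0 < vd (φ (X 1)) := by rw [hr1]; omega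
  by_cases h2 : vd (φ (X 0)) + vd (φ (X 1)) ≤ 2
  · exact base a b c k hb hc hk hk1 φ hφ l hz (by omega) (by omega)
  have hbr := bracket_lead φ l hz (by omega)
  -- reduce `y`
  have caseY : vd (φ (X 0)) ∣ vd (φ (X 1)) → IsGradedTame ![(a : ℤ), (b : ℤ), -(c : ℤ)] φ := by
    rintro ⟨q, hq⟩
    obtain ⟨r, hr⟩ := quot_mod c r0 r1 q (by rw [← hr0, ← hr1, hq]; ring)
    obtain ⟨ψ, g1, g2, g3, g4, g5⟩ := red_step a b c hc 1 0 (by decide) (by decide) (by decide)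
      φ hφ l hz q (k + r * b + c * r * k) (by simp [hk, hr]; ring) (by rw [hq]; ring) hp1 hp0 hbr
    exact g5 (ih _ (by rw [g4]; omega) ψ g1 g2 rfl)
  rcases divides φ l hz hp0 hp1 with h | h
  · exact caseY h
  · obtain ⟨q, hq⟩ := h
    obtain ⟨r, hr⟩ := quot_mod c r1 r0 q (by rw [← hr0, ← hr1, hq]; ring)
    rcases Nat.eq_zero_or_pos r with h0 | h0
    · apply caseY
      rw [hq, hr, h0]; simp
    · have hle : k ≤ r * b := hkb.trans (Nat.le_mul_of_pos_left b h0)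
      obtain ⟨ψ, g1, g2, g3, g4, g5⟩ := red_step a b c hc 0 1 (by decide) (by decide) (by decide)
        φ hφ l hz q (r * b - k) (by simp [hk, hr, Nat.cast_sub hle]; ring) (by rw [hq]; ring) hp0 hp1
        (by linear_combination -hbr)
      exact g5 (ih _ (by rw [g4]; omega) ψ g1 g2 rfl)

end GT

/-- Let `a ≥ b > 0`, `c > 0` with `gcd(a,c) = gcd(b,c) = 1`, let `Γ` be the
`ℤ`-grading of `K[x,y,z]` with `deg x = a`, `deg y = b`, `deg z = -c`, and let
`q̂ = max {q ∈ ℤ : bq ≡ a (mod c), bq < a}`. If `q̂ = 1`, then every `Γ`-graded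
automorphism of `K[x,y,z]` is graded-tame. Here `x = X 0`, `y = X 1`, `z = X 2`. -/
theorem graded_automorphism_is_graded_tame_of_qhat_eq_one
    {K : Type*} [Field K] [IsAlgClosed K] [CharZero K]
    (a b c : ℕ) (ha : 0 < a) (hb : 0 < b) (hc : 0 < c) (hab : b ≤ a)
    (hac : Nat.gcd a c = 1) (hbc : Nat.gcd b c = 1)
    (hqhat : IsGreatest {q : ℤ | (b : ℤ) * q ≡ (a : ℤ) [ZMOD (c : ℤ)] ∧ (b : ℤ) * q < (a : ℤ)} 1)
    (φ : MvPolynomial (Fin 3) K ≃ₐ[K] MvPolynomial (Fin 3) K)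
    (hφ : IsGraded ![(a : ℤ), (b : ℤ), -(c : ℤ)] φ) :
    IsGradedTame ![(a : ℤ), (b : ℤ), -(c : ℤ)] φ := by
  obtain ⟨⟨hmod, hlt⟩, hub⟩ := hqhat
  rw [mul_one] at hmod hlt
  have hlt' : b < a := by exact_mod_cast hlt
  obtain ⟨k, hk⟩ : c ∣ a - b := by
    have h1 := hmod.dvd
    have h2 : ((a - b : ℕ) : ℤ) = (a : ℤ) - b := by omega
    rw [← h2] at h1
    exact_mod_cast h1
  have hk' : a = b + c * k := by omega
  have hk1 : 1 ≤ k := by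
    rcases Nat.eq_zero_or_pos k with h0 | h0
    · subst h0; simp at hk'; omega
    · exact h0
  have hkb : k ≤ b := by
    by_contra hcon
    have hcon' : b < k := by omega
    have hmem : (1 + c : ℤ) ∈ {q : ℤ | (b : ℤ) * q ≡ (a : ℤ) [ZMOD (c : ℤ)] ∧
        (b : ℤ) * q < (a : ℤ)} := by
      constructor
      · rw [Int.modEq_iff_dvd]
        exact ⟨k - b, by rw [hk']; push_cast; ring⟩
      · rw [hk']
        push_cast
        have h1 : (b : ℤ) < k := by exact_mod_cast hcon'
        have h2 : (0 : ℤ) < c := by exact_mod_cast hc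
        nlinarith
    have := hub hmem
    omega
  obtain ⟨l, hl⟩ := GT.z_image a b c hc φ hφ
  exact GT.main a b c k hb hc hbc hk' hk1 hkb l _ φ hφ hl rfl
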